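/- Let p ∈ [1, ∞) and f ∈ L¹(Q0). Define S(f) = sup over sparse families (Q_i)_{i∈I} ⊂ D(Q0) of (Σ_{i∈I} ((1/|Q_i|)∫_{Q_i}|f − f_{Q_i}|)^p |Q_i|)^{1/p}. Then 2^{−1/p} S(f) ≤ ‖f‖_{SJN_p(Q0)} ≤ S(f). -/

import Mathlib

/-! The two functionals are compared one sparse family `S` at a time. Dyadic cubes that meet are
nested (`IsDyadicAt.subset`), and a cube of `S` strictly inside `Q` lies in a child of `Q`
(`exists_child`), so the cores `E_Q`, `Q ∈ S`, are pairwise disjoint (`core_inter_eq`). Hence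
`∫ (Σ_Q osc(Q) 1_{E_Q})^p = Σ_Q osc(Q)^p |E_Q|` (`lintegral_core_eq`). Clearly `|E_Q| ≤ |Q|`, and
sparseness gives `|Q| / 2 ≤ |E_Q|` (`half_vol_le_core`); both inequalities follow on taking `p`-th
roots and suprema. -/


open MeasureTheory ENNReal Set

noncomputable section

namespace SparseBrudnyi

/-- An axis-parallel cube in `ℝⁿ`, given by its lower corner and (positive) side length. -/
structure Cube (n : ℕ) where
  corner : Fin n → ℝ
  side : ℝ
  side_pos : 0 < side

namespace Cube

/-- The (half-open) cube, as a subset of `ℝⁿ`. -/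
def toSet {n : ℕ} (Q : Cube n) : Set (Fin n → ℝ) :=
  Set.univ.pi fun i => Set.Ico (Q.corner i) (Q.corner i + Q.side)

/-- The open interior of a cube. -/
def inter {n : ℕ} (Q : Cube n) : Set (Fin n → ℝ) :=
  Set.univ.pi fun i => Set.Ioo (Q.corner i) (Q.corner i + Q.side)

/-- The Lebesgue measure `|Q|` of a cube. -/
def vol {n : ℕ} (Q : Cube n) : ℝ≥0∞ := volume Q.toSet

end Cube

variable {n : ℕ}

/-- `Q` is a dyadic subcube of `Q0`, i.e. obtained from `Q0` by `m` successive bisections. -/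
def IsDyadicSubcube (Q0 Q : Cube n) : Prop :=
  ∃ m : ℕ, ∃ j : Fin n → ℕ, (∀ i, j i < 2 ^ m) ∧
    Q.side = Q0.side / 2 ^ m ∧
    ∀ i, Q.corner i = Q0.corner i + (j i : ℝ) * Q0.side / 2 ^ m

/-- `Ch_S(Q)`: the maximal (w.r.t. inclusion) cubes of `S` strictly contained in `Q`. -/
def sparseChildren (S : Set (Cube n)) (Q : Cube n) : Set (Cube n) :=
  {Q' | Q' ∈ S ∧ Q'.toSet ⊂ Q.toSet ∧
    ∀ Q'' ∈ S, Q''.toSet ⊂ Q.toSet → Q'.toSet ⊆ Q''.toSet → Q''.toSet ⊆ Q'.toSet}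

/-- `E_Q = Q \ ⋃_{Q' ∈ Ch_S(Q)} Q'`. -/
def core (S : Set (Cube n)) (Q : Cube n) : Set (Fin n → ℝ) :=
  Q.toSet \ ⋃ Q' ∈ sparseChildren S Q, Cube.toSet Q'

/-- A sparse family of dyadic subcubes of `Q0`:
`Σ_{Q' ∈ Ch_S(Q)} |Q'| ≤ (1/2)|Q|` for all `Q ∈ S`. -/
def IsSparse (Q0 : Cube n) (S : Set (Cube n)) : Prop :=
  S.Countable ∧ (∀ Q ∈ S, IsDyadicSubcube Q0 Q) ∧
    ∀ Q ∈ S, (∑' Q' : sparseChildren S Q, Cube.vol Q'.1) ≤ (1 / 2) * Q.vol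

/-- A family sparse of order `lam`:
`Σ_{Q' ∈ Ch_S(Q)} |Q'|^lam ≤ (1/2)|Q|^lam` for all `Q ∈ S`. -/
def IsSparseOfOrder (Q0 : Cube n) (lam : ℝ) (S : Set (Cube n)) : Prop :=
  S.Countable ∧ (∀ Q ∈ S, IsDyadicSubcube Q0 Q) ∧
    ∀ Q ∈ S, (∑' Q' : sparseChildren S Q, Cube.vol Q'.1 ^ lam) ≤ (1 / 2) * Q.vol ^ lam

/-- The average `f_Q = (1/|Q|) ∫_Q f`. -/
def cubeAvg (Q : Cube n) (f : (Fin n → ℝ) → ℝ) : ℝ :=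
  ⨍ x in Q.toSet, f x

/-- The mean oscillation `(1/|Q|) ∫_Q |f - f_Q|`, as an extended nonnegative real. -/
def osc (Q : Cube n) (f : (Fin n → ℝ) → ℝ) : ℝ≥0∞ :=
  Q.vol⁻¹ * ∫⁻ x in Q.toSet, ‖f x - cubeAvg Q f‖₊

/-- The sparse John–Nirenberg functional `‖f‖_{SJN_p(Q0)}`. -/
def sjnNorm (Q0 : Cube n) (p : ℝ) (f : (Fin n → ℝ) → ℝ) : ℝ≥0∞ :=
  ⨆ (S : Set (Cube n)) (_ : IsSparse Q0 S),
    (∫⁻ x in Q0.toSet,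
      (∑' Q : S, (core S Q.1).indicator (fun _ => osc Q.1 f) x) ^ p) ^ (1 / p)

/-- Best approximation error `E_k(f;Q)_q` by polynomials of degree at most `k-1` in `L^q(Q)`. -/
def polErr (k : ℕ) (q : ℝ) (f : (Fin n → ℝ) → ℝ) (Q : Cube n) : ℝ≥0∞ :=
  ⨅ (m : MvPolynomial (Fin n) ℝ) (_ : m.totalDegree < k),
    eLpNorm (fun x => f x - MvPolynomial.eval x m) (ENNReal.ofReal q)
      (volume.restrict Q.toSet)

/-- The sparse Brudnyi functional `‖f‖_{SV^{k,λ}_{p,q}(Q0)}`. -/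
def svNorm (Q0 : Cube n) (k : ℕ) (lam p q : ℝ) (f : (Fin n → ℝ) → ℝ) : ℝ≥0∞ :=
  ⨆ (S : Set (Cube n)) (_ : IsSparse Q0 S),
    (∫⁻ x in Q0.toSet,
      (∑' Q : S, (core S Q.1).indicator
        (fun _ => Cube.vol Q.1 ^ (lam / (n * q) - 1 / q) * polErr k q f Q.1) x) ^ p) ^ (1 / p)

/-- The fractional sparse Brudnyi functional `‖f‖_{S̃V^{k,λ}_{p,q}(Q0)}`, where the supremum
runs over families sparse of order `1 - λ/n`. -/
def svNormFrac (Q0 : Cube n) (k : ℕ) (lam p q : ℝ) (f : (Fin n → ℝ) → ℝ) : ℝ≥0∞ :=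
  ⨆ (S : Set (Cube n)) (_ : IsSparseOfOrder Q0 (1 - lam / n) S),
    (∫⁻ x in Q0.toSet,
      (∑' Q : S, (core S Q.1).indicator
        (fun _ => Cube.vol Q.1 ^ (lam / (n * q) - 1 / q) * polErr k q f Q.1) x) ^ p) ^ (1 / p)

/-- The dyadic local fractional maximal operator `M_{q,λ,Q0}`. -/
def fracMax (Q0 : Cube n) (q lam : ℝ) (f : (Fin n → ℝ) → ℝ) (x : Fin n → ℝ) : ℝ≥0∞ :=
  ⨆ (Q : Cube n) (_ : IsDyadicSubcube Q0 Q) (_ : x ∈ Q.toSet),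
    (Q.vol ^ (lam / n - 1) * ∫⁻ y in Q.toSet, (‖f y‖₊ : ℝ≥0∞) ^ q) ^ (1 / q)

/-- The BMO seminorm over all subcubes of `Q0`. -/
def bmoNorm (Q0 : Cube n) (f : (Fin n → ℝ) → ℝ) : ℝ≥0∞ :=
  ⨆ (Q : Cube n) (_ : Q.toSet ⊆ Q0.toSet), osc Q f

/-- A packing of `Q0`: a countable family of subcubes with pairwise disjoint interiors. -/
def IsPacking (Q0 : Cube n) (P : Set (Cube n)) : Prop :=
  P.Countable ∧ (∀ Q ∈ P, Q.toSet ⊆ Q0.toSet) ∧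
    P.Pairwise fun Q Q' => Disjoint Q.inter Q'.inter

/-- The John–Nirenberg functional `‖f‖_{JN_p(Q0)}`. -/
def jnNorm (Q0 : Cube n) (p : ℝ) (f : (Fin n → ℝ) → ℝ) : ℝ≥0∞ :=
  ⨆ (P : Set (Cube n)) (_ : IsPacking Q0 P),
    (∑' Q : P, osc Q.1 f ^ p * Cube.vol Q.1) ^ (1 / p)

/-- The Garsia–Rodemich functional `‖f‖_{GaRo_{L(p,∞)}(Q0)}` (written via `p'`). -/
def garoNorm (Q0 : Cube n) (p' : ℝ) (f : (Fin n → ℝ) → ℝ) : ℝ≥0∞ :=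
  ⨆ (P : Set (Cube n)) (_ : IsPacking Q0 P),
    (∑' Q : P, ∫⁻ x in (Q.1 : Cube n).toSet, ‖f x - cubeAvg Q.1 f‖₊) /
      (∑' Q : P, Cube.vol Q.1) ^ (1 / p')

/-! ### Geometry of dyadic cubes -/

theorem Cube.mem_toSet {Q : Cube n} {x : Fin n → ℝ} :
    x ∈ Q.toSet ↔ ∀ i, Q.corner i ≤ x i ∧ x i < Q.corner i + Q.side := by
  simp [Cube.toSet, Set.mem_pi]

theorem Cube.corner_mem (Q : Cube n) : Q.corner ∈ Q.toSet :=
  Cube.mem_toSet.2 fun _ => ⟨le_rfl, by linarith [Q.side_pos]⟩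

theorem Cube.measurableSet_toSet (Q : Cube n) : MeasurableSet Q.toSet :=
  MeasurableSet.univ_pi fun _ => measurableSet_Ico

theorem Cube.vol_ne_top (Q : Cube n) : Q.vol ≠ ∞ := by
  simp only [Cube.vol, Cube.toSet, Real.volume_pi_Ico]
  exact ENNReal.prod_ne_top fun _ _ => ENNReal.ofReal_ne_top

theorem Cube.side_le_of_subset (hn : 0 < n) {Q R : Cube n} (h : Q.toSet ⊆ R.toSet)
    (hc : Q.corner = R.corner) : Q.side ≤ R.side := by
  refine le_of_forall_lt_imp_le_of_dense fun t ht => ?_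
  rcases lt_or_ge t 0 with h0 | h0
  · linarith [R.side_pos]
  have hx : (fun i => Q.corner i + t) ∈ Q.toSet :=
    Cube.mem_toSet.2 fun i => ⟨by linarith, by linarith⟩
  have h1 := (Cube.mem_toSet.1 (h hx) ⟨0, hn⟩).2
  rw [hc] at h1
  linarith

/-- In positive dimension a cube is determined by its point set, so a family of cubes does not
count the same set twice. -/
theorem Cube.toSet_injective (hn : 0 < n) {Q R : Cube n} (h : Q.toSet = R.toSet) : Q = R := by
  have hc : Q.corner = R.corner := by
    funext i
    exact le_antisymm (Cube.mem_toSet.1 (h ▸ R.corner_mem) i).1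
      (Cube.mem_toSet.1 (h ▸ Q.corner_mem) i).1
  have hs : Q.side = R.side :=
    le_antisymm (Cube.side_le_of_subset hn h.subset hc)
      (Cube.side_le_of_subset hn h.symm.subset hc.symm)
  cases Q; cases R
  simp_all

/-- `Q` arises from `Q0` by exactly `m` bisections. -/
def IsDyadicAt (Q0 : Cube n) (m : ℕ) (Q : Cube n) : Prop :=
  ∃ j : Fin n → ℕ, (∀ i, j i < 2 ^ m) ∧
    Q.side = Q0.side / 2 ^ m ∧
    ∀ i, Q.corner i = Q0.corner i + (j i : ℝ) * Q0.side / 2 ^ m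

/-- Two dyadic cubes that share a point are nested, the one of the later generation being the
smaller. -/
theorem IsDyadicAt.subset {Q0 Q R : Cube n} {m k : ℕ} (hQ : IsDyadicAt Q0 m Q)
    (hR : IsDyadicAt Q0 k R) (hmk : m ≤ k) {x : Fin n → ℝ} (hxQ : x ∈ Q.toSet)
    (hxR : x ∈ R.toSet) : R.toSet ⊆ Q.toSet := by
  obtain ⟨a, -, hQs, hQc⟩ := hQ
  obtain ⟨b, -, hRs, hRc⟩ := hR
  obtain ⟨d, rfl⟩ := Nat.exists_eq_add_of_le hmk
  intro y hy
  rw [Cube.mem_toSet] at hxQ hxR hy ⊢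
  intro i
  have h1 := hxQ i
  have h2 := hxR i
  have h3 := hy i
  rw [hQs, hQc] at h1 ⊢
  rw [hRs, hRc] at h2 h3
  -- `u` is the side length of `R`; all corners are integer multiples of `u` away from `Q0.corner`.
  set u : ℝ := Q0.side / 2 ^ (m + d) with hu
  have hu0 : 0 < u := div_pos Q0.side_pos (by positivity)
  have e1 : Q0.side / 2 ^ m = 2 ^ d * u := by rw [hu, pow_add]; field_simp
  have e2 : (a i : ℝ) * Q0.side / 2 ^ m = (a i * 2 ^ d : ℕ) * u := by
    rw [mul_div_assoc, e1]; push_cast; ring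
  have e3 : (b i : ℝ) * Q0.side / 2 ^ (m + d) = b i * u := by rw [mul_div_assoc]
  rw [e1, e2] at h1 ⊢
  rw [e3] at h2 h3
  have l1 : a i * 2 ^ d ≤ b i := by
    have : ((a i * 2 ^ d : ℕ) : ℝ) < (b i + 1 : ℕ) := by
      refine lt_of_mul_lt_mul_right ?_ hu0.le
      push_cast at *
      linarith [h1.1, h2.2]
    exact Nat.lt_succ_iff.1 (Nat.cast_lt.1 this)
  have l2 : b i + 1 ≤ a i * 2 ^ d + 2 ^ d := by
    have : ((b i : ℕ) : ℝ) < (a i * 2 ^ d + 2 ^ d : ℕ) := by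
      refine lt_of_mul_lt_mul_right ?_ hu0.le
      push_cast at *
      linarith [h1.2, h2.1]
    exact Nat.cast_lt.1 this
  have l1' : ((a i * 2 ^ d : ℕ) : ℝ) * u ≤ b i * u :=
    mul_le_mul_of_nonneg_right (Nat.cast_le.2 l1) hu0.le
  have l2' : ((b i + 1 : ℕ) : ℝ) * u ≤ (a i * 2 ^ d + 2 ^ d : ℕ) * u :=
    mul_le_mul_of_nonneg_right (Nat.cast_le.2 l2) hu0.le
  push_cast at *
  constructor <;> linarith [h3.1, h3.2]

theorem IsDyadicSubcube.subset {Q0 Q : Cube n} (h : IsDyadicSubcube Q0 Q) :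
    Q.toSet ⊆ Q0.toSet := by
  obtain ⟨m, hm⟩ := h
  have h0 : IsDyadicAt Q0 0 Q0 := ⟨fun _ => 0, by simp, by simp, by simp⟩
  refine h0.subset hm (Nat.zero_le _) ?_ Q.corner_mem
  obtain ⟨j, hj, -, hc⟩ := hm
  refine Cube.mem_toSet.2 fun i => ?_
  rw [hc, mul_div_right_comm, ← mul_div_right_comm, mul_div_assoc, mul_div_left_comm]
  have hj' : (j i : ℝ) < 2 ^ m := by exact_mod_cast hj i
  have h1 : (j i : ℝ) / 2 ^ m < 1 := (div_lt_one (by positivity)).2 hj'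
  have h2 : (0 : ℝ) ≤ j i / 2 ^ m := by positivity
  constructor <;> nlinarith [Q0.side_pos]

/-! ### The cores of a sparse family -/

/-- A cube of `S` strictly inside `Q` lies in some child of `Q`: among the cubes of `S` between
the two, one of the earliest generation is maximal. -/
theorem exists_child {Q0 : Cube n} {S : Set (Cube n)} (hS : ∀ Q ∈ S, IsDyadicSubcube Q0 Q)
    {Q R : Cube n} (hR : R ∈ S) (hRQ : R.toSet ⊂ Q.toSet) :
    ∃ T ∈ sparseChildren S Q, R.toSet ⊆ T.toSet := by
  classical
  have hex : ∃ m, ∃ T ∈ S, T.toSet ⊂ Q.toSet ∧ R.toSet ⊆ T.toSet ∧ IsDyadicAt Q0 m T := by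
    obtain ⟨m, hm⟩ := hS R hR
    exact ⟨m, R, hR, hRQ, subset_rfl, hm⟩
  obtain ⟨T, hT, hTQ, hRT, hTm⟩ := Nat.find_spec hex
  refine ⟨T, ⟨hT, hTQ, fun U hU hUQ hTU => ?_⟩, hRT⟩
  obtain ⟨k, hk⟩ := hS U hU
  exact hTm.subset hk (Nat.find_min' hex ⟨U, hU, hUQ, hRT.trans hTU, hk⟩) T.corner_mem
    (hTU T.corner_mem)

theorem core_subset (S : Set (Cube n)) (Q : Cube n) : core S Q ⊆ Q.toSet := sdiff_subset

theorem measurableSet_core {S : Set (Cube n)} (hS : S.Countable) (Q : Cube n) :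
    MeasurableSet (core S Q) :=
  Q.measurableSet_toSet.diff <| MeasurableSet.biUnion (hS.mono fun _ h => h.1)
    fun T _ => T.measurableSet_toSet

theorem core_inter_eq {Q0 : Cube n} (hn : 0 < n) {S : Set (Cube n)}
    (hS : ∀ Q ∈ S, IsDyadicSubcube Q0 Q) {Q R : Cube n} (hQ : Q ∈ S) (hR : R ∈ S)
    {x : Fin n → ℝ} (hxQ : x ∈ core S Q) (hxR : x ∈ core S R) : Q = R := by
  obtain ⟨m, hm⟩ := hS Q hQ
  obtain ⟨k, hk⟩ := hS R hR
  wlog hmk : m ≤ k generalizing Q R m k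
  · exact (this hR hQ hxR hxQ k hk m hm (le_of_not_ge hmk)).symm
  have hsub : R.toSet ⊆ Q.toSet := IsDyadicAt.subset hm hk hmk hxQ.1 hxR.1
  by_contra hne
  have hss : R.toSet ⊂ Q.toSet :=
    hsub.ssubset_of_ne fun h => hne (Cube.toSet_injective hn h).symm
  obtain ⟨T, hT, hRT⟩ := exists_child hS hR hss
  exact hxQ.2 (mem_iUnion₂.2 ⟨T, hT, hRT hxR.1⟩)

theorem half_vol_le_core {Q0 : Cube n} {S : Set (Cube n)} (hS : IsSparse Q0 S) {Q : Cube n}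
    (hQ : Q ∈ S) : 2⁻¹ * Q.vol ≤ volume (core S Q) := by
  have hU : volume (⋃ T ∈ sparseChildren S Q, Cube.toSet T) ≤ 2⁻¹ * Q.vol := by
    have := hS.2.2 Q hQ
    rw [one_div] at this
    exact (measure_biUnion_le _ (hS.1.mono fun _ h => h.1) _).trans this
  have hsplit : Q.vol - 2⁻¹ * Q.vol = 2⁻¹ * Q.vol := by
    rw [mul_comm, ← div_eq_mul_inv, ENNReal.sub_half Q.vol_ne_top]
  calc 2⁻¹ * Q.vol = Q.vol - 2⁻¹ * Q.vol := hsplit.symm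
    _ ≤ Q.vol - volume (⋃ T ∈ sparseChildren S Q, Cube.toSet T) := tsub_le_tsub_left hU _
    _ ≤ volume (core S Q) := le_measure_sdiff

/-! ### The sparse functional as a sum -/

/-- The `p`-th power of a sum with at most one nonzero term can be taken termwise. -/
theorem tsum_rpow_of_subsingleton {ι : Type*} {p : ℝ} (hp : 0 < p) (g : ι → ℝ≥0∞)
    (hg : ∀ i j, g i ≠ 0 → g j ≠ 0 → i = j) : (∑' i, g i) ^ p = ∑' i, g i ^ p := by
  by_cases h : ∃ i, g i ≠ 0
  · obtain ⟨i, hi⟩ := h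
    have h0 : ∀ j, j ≠ i → g j = 0 := fun j hj => by
      by_contra hne
      exact hj (hg j i hne hi)
    rw [tsum_eq_single i h0, tsum_eq_single i fun j hj => by
      rw [h0 j hj, ENNReal.zero_rpow_of_pos hp]]
  · push Not at h
    simp [h, ENNReal.zero_rpow_of_pos hp]

/-- Since the cores are pairwise disjoint, the `L^p` norm in the definition of the sparse
John–Nirenberg functional is an `ℓ^p` sum weighted by the measures of the cores. -/
theorem lintegral_core_eq (hn : 0 < n) {Q0 : Cube n} {S : Set (Cube n)} (hS : IsSparse Q0 S)
    {p : ℝ} (hp : 0 < p) (c : Cube n → ℝ≥0∞) :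
    ∫⁻ x in Q0.toSet, (∑' Q : S, (core S Q.1).indicator (fun _ => c Q.1) x) ^ p =
      ∑' Q : S, c Q.1 ^ p * volume (core S Q.1) := by
  have : Countable S := hS.1.to_subtype
  have hpt : ∀ x, (∑' Q : S, (core S Q.1).indicator (fun _ => c Q.1) x) ^ p =
      ∑' Q : S, (core S Q.1).indicator (fun _ => c Q.1 ^ p) x := fun x => by
    rw [tsum_rpow_of_subsingleton hp]
    · refine tsum_congr fun Q => ?_
      by_cases hx : x ∈ core S Q.1 <;> simp [hx, hp]
    · intro Q R h1 h2
      exact Subtype.ext (core_inter_eq hn hS.2.1 Q.2 R.2 (mem_of_indicator_ne_zero h1)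
        (mem_of_indicator_ne_zero h2))
  simp_rw [hpt]
  have hm : ∀ Q : S, AEMeasurable ((core S Q.1).indicator fun _ => c Q.1 ^ p)
      (volume.restrict Q0.toSet) := fun Q =>
    (measurable_const.indicator (measurableSet_core hS.1 Q.1)).aemeasurable
  rw [lintegral_tsum hm]
  refine tsum_congr fun Q => ?_
  rw [lintegral_indicator_const (measurableSet_core hS.1 Q.1),
    Measure.restrict_eq_self _ ((core_subset S Q.1).trans (hS.2.1 Q.1 Q.2).subset)]

/-- With `S(f)` the supremum over sparse families of
`(Σ_i ((1/|Q_i|)∫_{Q_i}|f − f_{Q_i}|)^p |Q_i|)^{1/p}`, one has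
`2^{−1/p} S(f) ≤ ‖f‖_{SJN_p(Q0)} ≤ S(f)`. -/
theorem statement1 {n : ℕ} (hn : 0 < n) (Q0 : Cube n) (p : ℝ) (hp : 1 ≤ p)
    (f : (Fin n → ℝ) → ℝ) (hf : IntegrableOn f Q0.toSet volume) :
    (2 : ℝ≥0∞) ^ (-(1 / p)) *
        (⨆ (S : Set (Cube n)) (_ : IsSparse Q0 S),
          (∑' Q : S, osc Q.1 f ^ p * Cube.vol Q.1) ^ (1 / p)) ≤ sjnNorm Q0 p f ∧
      sjnNorm Q0 p f ≤
        ⨆ (S : Set (Cube n)) (_ : IsSparse Q0 S),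
          (∑' Q : S, osc Q.1 f ^ p * Cube.vol Q.1) ^ (1 / p) := by
  have hp0 : 0 < p := by linarith
  have hp1 : 0 ≤ 1 / p := by positivity
  constructor
  · simp_rw [sjnNorm, ENNReal.mul_iSup]
    refine iSup₂_mono fun S hS => ?_
    rw [lintegral_core_eq hn hS hp0 fun Q => osc Q f, ENNReal.rpow_neg, ← ENNReal.inv_rpow,
      ← ENNReal.mul_rpow_of_nonneg _ _ hp1, ← ENNReal.tsum_mul_left]
    refine ENNReal.rpow_le_rpow (ENNReal.tsum_le_tsum fun Q => ?_) hp1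
    rw [mul_left_comm]
    gcongr
    exact half_vol_le_core hS Q.2
  · refine iSup₂_mono fun S hS => ?_
    rw [lintegral_core_eq hn hS hp0 fun Q => osc Q f]
    refine ENNReal.rpow_le_rpow (ENNReal.tsum_le_tsum fun Q => ?_) hp1
    gcongr
    exact measure_mono (core_subset S Q.1)

end SparseBrudnyi
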